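/- arXiv:1802.08143 — 2 statements merged into one kernel-verified Lean document; each statement's English description precedes it below -/
import Mathlib

section
/- Let Y and U be Hilbert spaces, A the generator of a strongly continuous semigroup of contractions S(t) on Y, and B: U → Y a bounded linear operator with adjoint B*. Fix 0 < μ ≤ T. Assume the generalized observability inequality: there exist constants ϑ > 0 and c > 0, independent of the signal, such that for every T-μ persistently exciting signal σ and every y_0 ∈ Y one has ∫_0^ϑ σ(t) ‖B* S(t) y_0‖_U² dt ≥ c ‖y_0‖_Y². Then there exist constants M ≥ 1 and γ > 0, independent of the signal, such that for every y_0 ∈ Y and every T-μ persistently exciting signal σ the mild solution y of y'(t) = A y(t) − σ(t) B B* y(t), y(0) = y_0, satisfies ‖y(t)‖_Y ≤ M e^{−γt} ‖y_0‖_Y for all t ≥ 0. -/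
/-!
Write `D(t) = ∫₀ᵗ σ ‖B* y‖²` for the energy dissipated up to time `t`.

*Dissipation.* A mild solution need not be differentiable, so the inequality
`‖y(t)‖² + 2 D(t) ≤ ‖y₀‖²` is obtained without the generator. From `S(h) y₀ = y(h) + I(h)`, where `I`
is the Duhamel integral, contractivity gives `‖y(h)‖² ≤ ‖y₀‖² - 2 ⟪y(h), I(h)⟫`, and joint continuity
of `(t, x) ↦ S(t) x` shows `⟪y(h), I(h)⟫ = D(h) + o(h)` (`energy_small_time`). Mild solutions
can be restarted at any time (`IsDampedMildSolution.shift`), so the right upper Dini derivative of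
`‖y‖² + 2 D` is nonpositive everywhere, and this function stays below its initial value
(`energy_inequality`).

*Observability of the damped flow.* Duhamel's formula and Cauchy-Schwarz give
`∫₀^ϑ σ ‖B* S(t) y₀‖² dt ≤ (2 + 2 ‖B‖⁴ ϑ²) D(ϑ)` (`observation_le_dissipation`). With the
observability inequality this makes `D(ϑ)` at least a fixed multiple of `‖y₀‖²`, so the norm shrinks
by a factor `exp (-a)` over each window of length `ϑ`, with `a > 0` independent of the signal.
Restarting the solution at multiples of `ϑ` (a shifted PE signal is PE) gives exponential decay.
-/

open Filter Set MeasureTheory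

/-- A strongly continuous semigroup of contractions on the Hilbert space `Y`. -/
structure ContractionSemigroup (Y : Type*) [NormedAddCommGroup Y] [InnerProductSpace ℝ Y] where
  S : ℝ → Y →L[ℝ] Y
  map_zero : S 0 = ContinuousLinearMap.id ℝ Y
  map_add : ∀ s t : ℝ, 0 ≤ s → 0 ≤ t → S (s + t) = (S s).comp (S t)
  strong_continuity : ∀ y : Y, ContinuousOn (fun t => S t y) (Ici (0 : ℝ))
  contraction : ∀ t ≥ (0 : ℝ), ∀ y : Y, ‖S t y‖ ≤ ‖y‖

/-- A `T`-`μ` persistently exciting (PE) signal: a measurable `σ : [0,∞) → [0,1]`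
with `∫_t^{t+T} σ(s) ds ≥ μ` for all `t ≥ 0`. -/
def IsPESignal (T μ : ℝ) (σ : ℝ → ℝ) : Prop :=
  Measurable σ ∧ (∀ t, σ t ∈ Icc (0 : ℝ) 1) ∧
    ∀ t ≥ (0 : ℝ), μ ≤ ∫ s in t..(t + T), σ s

variable {Y U : Type*} [NormedAddCommGroup Y] [InnerProductSpace ℝ Y] [CompleteSpace Y]
  [NormedAddCommGroup U] [InnerProductSpace ℝ U] [CompleteSpace U]

/-- The mild solution of the intermittently damped system
`y'(t) = A y(t) − σ(t) B B^* y(t)`, `y(0) = y₀`: the continuous function satisfying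
`y(t) = S(t) y₀ − ∫_0^t S(t−s) σ(s) B B^* y(s) ds`. -/
def IsDampedMildSolution (Sg : ContractionSemigroup Y) (B : U →L[ℝ] Y) (σ : ℝ → ℝ)
    (y0 : Y) (y : ℝ → Y) : Prop :=
  ContinuousOn y (Ici (0 : ℝ)) ∧ y 0 = y0 ∧
    ∀ t ≥ (0 : ℝ),
      y t = Sg.S t y0 -
        ∫ s in (0 : ℝ)..t, σ s • Sg.S (t - s) (B (ContinuousLinearMap.adjoint B (y s)))

/-! ### Shifted signals, joint continuity, integrability -/

theorem IsPESignal.shift {T μ : ℝ} {σ : ℝ → ℝ} (hσ : IsPESignal T μ σ) {a : ℝ} (ha : 0 ≤ a) :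
    IsPESignal T μ (fun s => σ (a + s)) := by
  obtain ⟨h1, h2, h3⟩ := hσ
  refine ⟨h1.comp (measurable_const_add a), fun t => h2 _, fun t ht => ?_⟩
  rw [intervalIntegral.integral_comp_add_left (fun s => σ s) a, ← add_assoc]
  exact h3 _ (add_nonneg ha ht)

/-- Joint continuity of a contraction semigroup in time and state: contractivity makes strong
continuity uniform in the state. -/
theorem ContractionSemigroup.continuousOn_apply {Y : Type*} [NormedAddCommGroup Y]
    [InnerProductSpace ℝ Y] (Sg : ContractionSemigroup Y) {X : Type*} [TopologicalSpace X]
    {D : Set X} {φ : X → ℝ} {g : X → Y} (hφ : ContinuousOn φ D) (hg : ContinuousOn g D)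
    (h0 : ∀ x ∈ D, 0 ≤ φ x) : ContinuousOn (fun x => Sg.S (φ x) (g x)) D := by
  intro x hx
  have h1 : Tendsto (fun z => Sg.S (φ z) (g x)) (nhdsWithin x D) (nhds (Sg.S (φ x) (g x))) :=
    ((Sg.strong_continuity (g x)).comp hφ h0) x hx
  have h2 : Tendsto (fun z => Sg.S (φ z) (g z - g x)) (nhdsWithin x D) (nhds 0) := by
    have h3 : Tendsto (fun z => ‖g z - g x‖) (nhdsWithin x D) (nhds 0) := by
      simpa using ((hg x hx).sub_const (g x)).norm
    refine squeeze_zero_norm' ?_ h3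
    filter_upwards [self_mem_nhdsWithin] with z hz
    exact Sg.contraction _ (h0 z hz) _
  have h4 := h1.add h2
  simpa [ContinuousWithinAt] using h4

theorem intervalIntegrable_signal_smul {E : Type*} [NormedAddCommGroup E] [NormedSpace ℝ E]
    {σ : ℝ → ℝ} (hσ : Measurable σ) (hb : ∀ t, σ t ∈ Icc (0 : ℝ) 1) {g : ℝ → E} {a b : ℝ}
    (hab : a ≤ b) (hg : ContinuousOn g (Icc a b)) :
    IntervalIntegrable (fun s => σ s • g s) volume a b := by
  have h1 : IntervalIntegrable g volume a b := hg.intervalIntegrable_of_Icc hab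
  rw [intervalIntegrable_iff] at h1 ⊢
  refine Integrable.bdd_smul h1 1 hσ.aestronglyMeasurable ?_
  filter_upwards with t
  rw [Real.norm_eq_abs, abs_of_nonneg (hb t).1]
  exact (hb t).2

section MildSolution

variable {Sg : ContractionSemigroup Y} {B : U →L[ℝ] Y} {σ : ℝ → ℝ} {y0 : Y} {y : ℝ → Y}

theorem continuousOn_duhamel_integrand (hc : ContinuousOn y (Ici (0 : ℝ))) (t : ℝ) :
    ContinuousOn (fun s => Sg.S (t - s) (B (ContinuousLinearMap.adjoint B (y s))))
      (Icc (0 : ℝ) t) := by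
  refine Sg.continuousOn_apply (by fun_prop) ?_ (fun s hs => sub_nonneg.2 hs.2)
  have := hc.mono (Icc_subset_Ici_self : Icc 0 t ⊆ Ici 0)
  fun_prop

theorem intervalIntegrable_dissipation (hσ : Measurable σ) (hb : ∀ t, σ t ∈ Icc (0 : ℝ) 1)
    (hc : ContinuousOn y (Ici (0 : ℝ))) {a b : ℝ} (ha : 0 ≤ a) (hab : a ≤ b) :
    IntervalIntegrable (fun s => σ s * ‖ContinuousLinearMap.adjoint B (y s)‖ ^ 2) volume a b := by
  refine intervalIntegrable_signal_smul hσ hb hab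
    (g := fun s => ‖ContinuousLinearMap.adjoint B (y s)‖ ^ 2) ?_
  have := hc.mono (Icc_subset_Ici_self.trans (Ici_subset_Ici.2 ha) : Icc a b ⊆ Ici 0)
  fun_prop

/-! ### Restarting mild solutions -/

/-- A mild solution restarted at time `a` is a mild solution for the shifted signal. -/
theorem IsDampedMildSolution.shift (hσ : Measurable σ) (hb : ∀ t, σ t ∈ Icc (0 : ℝ) 1)
    (hy : IsDampedMildSolution Sg B σ y0 y) {a : ℝ} (ha : 0 ≤ a) :
    IsDampedMildSolution Sg B (fun s => σ (a + s)) (y a) (fun s => y (a + s)) := by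
  obtain ⟨hc, h0, hm⟩ := hy
  refine ⟨hc.comp (by fun_prop) (fun s hs => add_nonneg ha hs), by simp, fun t ht => ?_⟩
  set F : ℝ → Y := fun s => σ s • Sg.S (a + t - s) (B (ContinuousLinearMap.adjoint B (y s)))
    with hF
  have hFi : IntervalIntegrable F volume 0 (a + t) :=
    intervalIntegrable_signal_smul hσ hb (add_nonneg ha ht)
      (continuousOn_duhamel_integrand hc (a + t))
  have hmem : a ∈ uIcc 0 (a + t) := by
    rw [uIcc_of_le (by linarith)]; exact ⟨ha, by linarith⟩
  have hF1 : IntervalIntegrable F volume 0 a :=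
    hFi.mono_set (uIcc_subset_uIcc_left hmem)
  have hF2 : IntervalIntegrable F volume a (a + t) :=
    hFi.mono_set (uIcc_subset_uIcc_right hmem)
  have hshift : ∫ s in (0 : ℝ)..t, σ (a + s) •
      Sg.S (t - s) (B (ContinuousLinearMap.adjoint B (y (a + s)))) = ∫ s in a..(a + t), F s := by
    have := intervalIntegral.integral_comp_add_left (a := 0) (b := t) F a
    rw [add_zero] at this
    rw [← this]
    refine intervalIntegral.integral_congr fun s _ => ?_
    simp only [hF]
    congr 3
    ring
  have hpast : Sg.S t (∫ s in (0 : ℝ)..a, σ s •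
      Sg.S (a - s) (B (ContinuousLinearMap.adjoint B (y s)))) = ∫ s in (0 : ℝ)..a, F s := by
    rw [← ContinuousLinearMap.intervalIntegral_comp_comm _
      (intervalIntegrable_signal_smul hσ hb ha (continuousOn_duhamel_integrand hc a))]
    refine intervalIntegral.integral_congr fun s hs => ?_
    rw [uIcc_of_le ha] at hs
    simp only [hF]
    rw [show a + t - s = t + (a - s) by ring, Sg.map_add t (a - s) ht (sub_nonneg.2 hs.2)]
    simp
  have hS : Sg.S (a + t) y0 = Sg.S t (Sg.S a y0) := by
    rw [add_comm, Sg.map_add t a ht ha]; rfl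
  show y (a + t) = _
  rw [hshift, hm (a + t) (add_nonneg ha ht), hm a ha, map_sub, hpast, hS,
    ← intervalIntegral.integral_add_adjacent_intervals hF1 hF2]
  abel

/-! ### Energy dissipation -/

/-- The dissipation inequality at small times, up to an error `ε h`. -/
theorem energy_small_time (hσ : Measurable σ) (hb : ∀ t, σ t ∈ Icc (0 : ℝ) 1)
    (hy : IsDampedMildSolution Sg B σ y0 y) {ε : ℝ} (hε : 0 < ε) :
    ∃ δ > (0 : ℝ), ∀ h, 0 ≤ h → h < δ →
      ‖y h‖ ^ 2 + 2 * ∫ s in (0 : ℝ)..h, σ s * ‖ContinuousLinearMap.adjoint B (y s)‖ ^ 2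
        ≤ ‖y0‖ ^ 2 + ε * h := by
  obtain ⟨hc, h0, hm⟩ := hy
  let D : Set (ℝ × ℝ) := {p | 0 ≤ p.2 ∧ p.2 ≤ p.1}
  -- The gap between the Duhamel pairing and the dissipation rate; it vanishes at the origin.
  let Φ : ℝ × ℝ → ℝ := fun p =>
    inner ℝ (y p.1) (Sg.S (p.1 - p.2) (B (ContinuousLinearMap.adjoint B (y p.2))))
      - ‖ContinuousLinearMap.adjoint B (y p.2)‖ ^ 2
  have hΦ : ContinuousOn Φ D := by
    have h1 : ContinuousOn (fun p : ℝ × ℝ => y p.1) D :=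
      hc.comp (by fun_prop) (fun p hp => hp.1.trans hp.2)
    have h2 : ContinuousOn (fun p : ℝ × ℝ => y p.2) D :=
      hc.comp (by fun_prop) (fun p hp => hp.1)
    have hadj : ContinuousOn (fun p : ℝ × ℝ => ContinuousLinearMap.adjoint B (y p.2)) D :=
      (ContinuousLinearMap.adjoint B).continuous.comp_continuousOn h2
    have h3 : ContinuousOn (fun p : ℝ × ℝ =>
        Sg.S (p.1 - p.2) (B (ContinuousLinearMap.adjoint B (y p.2)))) D :=
      Sg.continuousOn_apply (by fun_prop) (B.continuous.comp_continuousOn hadj) (fun p hp => sub_nonneg.2 hp.2)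
    exact (h1.inner h3).sub (hadj.norm.pow 2)
  have hΦ0 : Φ (0, 0) = 0 := by
    simp only [Φ, sub_zero, Sg.map_zero, ContinuousLinearMap.id_apply]
    rw [← ContinuousLinearMap.adjoint_inner_left, real_inner_self_eq_norm_sq, sub_self]
  obtain ⟨δ, hδ, hball⟩ := Metric.continuousWithinAt_iff.1 (hΦ (0, 0) ⟨le_rfl, le_rfl⟩)
    (ε / 2) (by positivity)
  refine ⟨δ, hδ, fun h hh hhδ => ?_⟩
  set G : ℝ → Y := fun s => σ s • Sg.S (h - s) (B (ContinuousLinearMap.adjoint B (y s)))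
  have hGi : IntervalIntegrable G volume 0 h :=
    intervalIntegrable_signal_smul hσ hb hh (continuousOn_duhamel_integrand hc h)
  set I : Y := ∫ s in (0 : ℝ)..h, G s with hI
  have hinner : inner ℝ (y h) I = ∫ s in (0 : ℝ)..h, inner ℝ (y h) (G s) := by
    have := ContinuousLinearMap.intervalIntegral_comp_comm (innerSL ℝ (y h)) hGi
    simpa using this.symm
  have hInnInt : IntervalIntegrable (fun s => inner ℝ (y h) (G s)) volume 0 h := by
    have hco := continuousOn_duhamel_integrand (Sg := Sg) (B := B) hc h
    have := intervalIntegrable_signal_smul hσ hb hh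
      (g := fun s => inner ℝ (y h) (Sg.S (h - s) (B (ContinuousLinearMap.adjoint B (y s)))))
      (continuousOn_const.inner hco)
    simpa [G, inner_smul_right] using this
  have hDi := intervalIntegrable_dissipation (B := B) hσ hb hc le_rfl hh
  have hlow : (∫ s in (0 : ℝ)..h, σ s * ‖ContinuousLinearMap.adjoint B (y s)‖ ^ 2)
      - ε / 2 * h ≤ inner ℝ (y h) I := by
    have hle : ∫ s in (0 : ℝ)..h, (σ s * ‖ContinuousLinearMap.adjoint B (y s)‖ ^ 2 - ε / 2)
        ≤ ∫ s in (0 : ℝ)..h, inner ℝ (y h) (G s) := by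
      refine intervalIntegral.integral_mono_on hh (hDi.sub intervalIntegrable_const) hInnInt ?_
      intro s hs
      have hd : dist ((h, s) : ℝ × ℝ) (0, 0) < δ := by
        rw [Prod.dist_eq, max_lt_iff]
        simp only [Real.dist_eq, sub_zero, abs_of_nonneg hh, abs_of_nonneg hs.1]
        exact ⟨hhδ, hs.2.trans_lt hhδ⟩
      have hlt := hball (show ((h, s) : ℝ × ℝ) ∈ D from hs) hd
      rw [hΦ0, Real.dist_eq, sub_zero] at hlt
      have hΦs : -(ε / 2) ≤ Φ (h, s) := (abs_lt.1 hlt).1.le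
      have hG : inner ℝ (y h) (G s) =
          σ s * (Φ (h, s) + ‖ContinuousLinearMap.adjoint B (y s)‖ ^ 2) := by
        simp [G, Φ, inner_smul_right]
      rw [hG]
      nlinarith [(hb s).1, (hb s).2, mul_le_mul_of_nonneg_left hΦs (hb s).1]
    rw [intervalIntegral.integral_sub hDi intervalIntegrable_const,
      intervalIntegral.integral_const, smul_eq_mul, sub_zero] at hle
    rw [hinner]
    linarith
  have hSy : Sg.S h y0 = y h + I := by rw [hm h hh, hI]; abel
  have hn : ‖Sg.S h y0‖ ^ 2 ≤ ‖y0‖ ^ 2 := by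
    have := Sg.contraction h hh y0
    gcongr
  rw [hSy, norm_add_sq_real] at hn
  nlinarith [sq_nonneg ‖I‖]

/-- The dissipation inequality for mild solutions. -/
theorem energy_inequality (hσ : Measurable σ) (hb : ∀ t, σ t ∈ Icc (0 : ℝ) 1)
    (hy : IsDampedMildSolution Sg B σ y0 y) {t : ℝ} (ht : 0 ≤ t) :
    ‖y t‖ ^ 2 + 2 * ∫ s in (0 : ℝ)..t, σ s * ‖ContinuousLinearMap.adjoint B (y s)‖ ^ 2
      ≤ ‖y0‖ ^ 2 := by
  obtain ⟨hc, h0, hm⟩ := id hy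
  set d : ℝ → ℝ := fun s => σ s * ‖ContinuousLinearMap.adjoint B (y s)‖ ^ 2 with hd
  have hdi : ∀ {a b : ℝ}, 0 ≤ a → a ≤ b → IntervalIntegrable d volume a b :=
    fun ha hab => intervalIntegrable_dissipation hσ hb hc ha hab
  have hcont : ContinuousOn (fun t => ‖y t‖ ^ 2 + 2 * ∫ s in (0 : ℝ)..t, d s) (Icc 0 t) := by
    have h1 : ContinuousOn y (Icc 0 t) := hc.mono Icc_subset_Ici_self
    have h2 : ContinuousOn (fun t => ∫ s in (0 : ℝ)..t, d s) (Icc 0 t) := by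
      have := intervalIntegral.continuousOn_primitive_interval (μ := volume) (f := d)
        (a := 0) (b := t)
        (by rw [uIcc_of_le ht]; exact (intervalIntegrable_iff_integrableOn_Icc_of_le ht).1
              (hdi le_rfl ht))
      rwa [uIcc_of_le ht] at this
    fun_prop
  have key := image_le_of_liminf_slope_right_le_deriv_boundary hcont
    (B := fun _ => ‖y0‖ ^ 2) (B' := fun _ => 0) (by simp [h0]) continuousOn_const
    (fun x _ => hasDerivWithinAt_const _ _ _) ?_
  · exact key ⟨ht, le_rfl⟩
  intro x hx r hr
  obtain ⟨δ, hδ, hsm⟩ := energy_small_time (hσ.comp (measurable_const_add x)) (fun s => hb _)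
    (hy.shift hσ hb hx.1) (half_pos hr)
  refine Eventually.frequently ?_
  filter_upwards [Ioo_mem_nhdsGT (show x < x + δ by linarith)] with z hz
  have h1 := hsm (z - x) (by linarith [hz.1]) (by linarith [hz.2])
  have h2 : ∫ s in (0 : ℝ)..(z - x), σ (x + s) *
      ‖ContinuousLinearMap.adjoint B (y (x + s))‖ ^ 2 = ∫ s in x..z, d s := by
    have := intervalIntegral.integral_comp_add_left (a := 0) (b := z - x) d x
    rw [add_zero, add_sub_cancel] at this
    exact this
  have h3 := intervalIntegral.integral_add_adjacent_intervals (hdi le_rfl hx.1)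
    (hdi hx.1 hz.1.le)
  simp only [Function.comp_def] at h1
  rw [h2, add_sub_cancel] at h1
  have hzx : 0 < z - x := sub_pos.2 hz.1
  rw [slope_def_field, div_lt_iff₀ hzx, ← h3]
  nlinarith [mul_pos hr hzx]

/-! ### Observation of the undamped flow -/

/-- The observation of the undamped flow is controlled by the energy dissipated by the damped
one. -/
theorem observation_le_dissipation (hσ : Measurable σ) (hb : ∀ t, σ t ∈ Icc (0 : ℝ) 1)
    (hy : IsDampedMildSolution Sg B σ y0 y) {ϑ : ℝ} (hϑ : 0 < ϑ) :
    ∫ t in (0 : ℝ)..ϑ, σ t * ‖ContinuousLinearMap.adjoint B (Sg.S t y0)‖ ^ 2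
      ≤ (2 + 2 * ‖B‖ ^ 4 * ϑ ^ 2) *
        ∫ s in (0 : ℝ)..ϑ, σ s * ‖ContinuousLinearMap.adjoint B (y s)‖ ^ 2 := by
  obtain ⟨hc, h0, hm⟩ := hy
  set u : ℝ → ℝ := fun s => σ s * ‖ContinuousLinearMap.adjoint B (y s)‖ with hu
  set D := ∫ s in (0 : ℝ)..ϑ, σ s * ‖ContinuousLinearMap.adjoint B (y s)‖ ^ 2 with hD
  have hDi := intervalIntegrable_dissipation (B := B) hσ hb hc le_rfl hϑ.le
  have hui : ∀ {a b : ℝ}, 0 ≤ a → a ≤ b → IntervalIntegrable u volume a b := by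
    intro a b ha hab
    refine intervalIntegrable_signal_smul hσ hb hab
      (g := fun s => ‖ContinuousLinearMap.adjoint B (y s)‖) ?_
    have := hc.mono (Icc_subset_Ici_self.trans (Ici_subset_Ici.2 ha) : Icc a b ⊆ Ici 0)
    fun_prop
  have hu0 : ∀ s, 0 ≤ u s := fun s => mul_nonneg (hb s).1 (norm_nonneg _)
  set J := ∫ s in (0 : ℝ)..ϑ, u s with hJ
  have hJ0 : 0 ≤ J := intervalIntegral.integral_nonneg hϑ.le fun s _ => hu0 s
  -- Cauchy-Schwarz, by integrating `2 m u ≤ u² + m²` with `m` the mean value of `u`.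
  have hCS : J ^ 2 ≤ ϑ * D := by
    have h1 : ∫ s in (0 : ℝ)..ϑ, (2 * (J / ϑ) * u s - (J / ϑ) ^ 2) ≤ D := by
      refine intervalIntegral.integral_mono_on hϑ.le
        (((hui le_rfl hϑ.le).const_mul _).sub intervalIntegrable_const) hDi fun s _ => ?_
      have h2 : u s ^ 2 ≤ σ s * ‖ContinuousLinearMap.adjoint B (y s)‖ ^ 2 := by
        rw [hu, mul_pow]
        have := hb s
        gcongr
        nlinarith [this.1, this.2]
      nlinarith [sq_nonneg (u s - J / ϑ)]
    rw [intervalIntegral.integral_sub ((hui le_rfl hϑ.le).const_mul _) intervalIntegrable_const,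
      intervalIntegral.integral_const_mul, intervalIntegral.integral_const, smul_eq_mul,
      sub_zero, ← hJ] at h1
    have h3 : 2 * (J / ϑ) * J - ϑ * (J / ϑ) ^ 2 = J ^ 2 / ϑ := by field_simp; ring
    rw [h3, div_le_iff₀ hϑ] at h1
    linarith
  have hBn : ∀ x : Y, ‖ContinuousLinearMap.adjoint B x‖ ≤ ‖B‖ * ‖x‖ := fun x => by
    simpa using (ContinuousLinearMap.adjoint B).le_opNorm x
  have hpt : ∀ t ∈ Icc (0 : ℝ) ϑ, σ t * ‖ContinuousLinearMap.adjoint B (Sg.S t y0)‖ ^ 2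
      ≤ 2 * (σ t * ‖ContinuousLinearMap.adjoint B (y t)‖ ^ 2) + 2 * ‖B‖ ^ 4 * (ϑ * D) := by
    intro t ht
    set I : Y := ∫ s in (0 : ℝ)..t, σ s • Sg.S (t - s) (B (ContinuousLinearMap.adjoint B (y s)))
      with hI
    have hSy : Sg.S t y0 = y t + I := by rw [hm t ht.1, hI]; abel
    have hIn : ‖I‖ ≤ ‖B‖ * J := by
      have h1 : ‖I‖ ≤ ∫ s in (0 : ℝ)..t, ‖B‖ * u s := by
        refine intervalIntegral.norm_integral_le_of_norm_le ht.1 ?_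
          ((hui le_rfl ht.1).const_mul _)
        filter_upwards with s hs
        rw [norm_smul, Real.norm_eq_abs, abs_of_nonneg (hb s).1, hu]
        have h2 := (Sg.contraction (t - s) (sub_nonneg.2 hs.2)
          (B (ContinuousLinearMap.adjoint B (y s)))).trans (B.le_opNorm _)
        nlinarith [mul_le_mul_of_nonneg_left h2 (hb s).1]
      have h3 := intervalIntegral.integral_add_adjacent_intervals (hui le_rfl ht.1)
        (hui ht.1 ht.2)
      have h4 : 0 ≤ ∫ s in t..ϑ, u s := intervalIntegral.integral_nonneg ht.2 fun s _ => hu0 s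
      rw [intervalIntegral.integral_const_mul] at h1
      refine h1.trans (mul_le_mul_of_nonneg_left ?_ (norm_nonneg _))
      linarith
    have hBI : ‖ContinuousLinearMap.adjoint B I‖ ^ 2 ≤ ‖B‖ ^ 4 * (ϑ * D) := by
      calc ‖ContinuousLinearMap.adjoint B I‖ ^ 2 ≤ (‖B‖ * (‖B‖ * J)) ^ 2 := by
            have := (hBn I).trans (mul_le_mul_of_nonneg_left hIn (norm_nonneg B))
            gcongr
        _ = ‖B‖ ^ 4 * J ^ 2 := by ring
        _ ≤ _ := by gcongr
    have hsq : ‖ContinuousLinearMap.adjoint B (Sg.S t y0)‖ ^ 2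
        ≤ 2 * ‖ContinuousLinearMap.adjoint B (y t)‖ ^ 2 + 2 * (‖B‖ ^ 4 * (ϑ * D)) := by
      rw [hSy, map_add]
      have h5 := norm_add_le (ContinuousLinearMap.adjoint B (y t)) (ContinuousLinearMap.adjoint B I)
      have h6 := pow_le_pow_left₀ (norm_nonneg _) h5 2
      nlinarith [sq_nonneg (‖ContinuousLinearMap.adjoint B (y t)‖ - ‖ContinuousLinearMap.adjoint B I‖)]
    have h7 := mul_le_mul_of_nonneg_left hsq (hb t).1
    have h8 : 0 ≤ 2 * (‖B‖ ^ 4 * (ϑ * D)) := by linarith [sq_nonneg ‖ContinuousLinearMap.adjoint B I‖]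
    have h9 := mul_le_mul_of_nonneg_right (hb t).2 h8
    linarith
  have hint : IntervalIntegrable
      (fun t => σ t * ‖ContinuousLinearMap.adjoint B (Sg.S t y0)‖ ^ 2) volume 0 ϑ :=
    intervalIntegrable_dissipation hσ hb (Sg.strong_continuity y0) le_rfl hϑ.le
  have hfin := intervalIntegral.integral_mono_on hϑ.le hint
    ((hDi.const_mul 2).add intervalIntegrable_const) hpt
  rw [intervalIntegral.integral_add (hDi.const_mul 2) intervalIntegrable_const,
    intervalIntegral.integral_const_mul, intervalIntegral.integral_const, smul_eq_mul,
    sub_zero, ← hD] at hfin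
  linarith

end MildSolution


/-! ### Exponential decay -/

/-- **Theorem (exponential stability under persistent excitation).**
Let `Y`, `U` be Hilbert spaces, `A` the generator of a strongly continuous semigroup of
contractions `S(t)` on `Y` and `B : U → Y` bounded linear with adjoint `B^*`; fix
`0 < μ ≤ T`.  Assume the generalized observability inequality: there are `ϑ, c > 0`,
independent of the signal, with `∫_0^ϑ σ(t) ‖B^* S(t) y₀‖² dt ≥ c ‖y₀‖²` for every
`T`-`μ` PE signal `σ` and every `y₀ ∈ Y`.  Then there exist `M ≥ 1` and `γ > 0`,
independent of the signal, such that every mild solution of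
`y' = A y − σ(t) B B^* y`, `y(0) = y₀`, satisfies `‖y(t)‖ ≤ M e^{−γt} ‖y₀‖`
for all `t ≥ 0`, every `y₀ ∈ Y` and every `T`-`μ` PE signal `σ`. -/
theorem pe_exponential_stability_of_observability
    (Sg : ContractionSemigroup Y) (B : U →L[ℝ] Y)
    (T μ : ℝ) (hμ : 0 < μ) (hμT : μ ≤ T)
    (hobs : ∃ ϑ > (0 : ℝ), ∃ c > (0 : ℝ), ∀ σ : ℝ → ℝ, IsPESignal T μ σ → ∀ y0 : Y,
      c * ‖y0‖ ^ 2 ≤ ∫ t in (0 : ℝ)..ϑ, σ t * ‖ContinuousLinearMap.adjoint B (Sg.S t y0)‖ ^ 2) :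
    ∃ M ≥ (1 : ℝ), ∃ γ > (0 : ℝ), ∀ (y0 : Y) (σ : ℝ → ℝ) (y : ℝ → Y),
      IsPESignal T μ σ → IsDampedMildSolution Sg B σ y0 y →
      ∀ t ≥ (0 : ℝ), ‖y t‖ ≤ M * Real.exp (-γ * t) * ‖y0‖ := by
  obtain ⟨ϑ, hϑ, c, hc, hobs⟩ := hobs
  let K : ℝ := 2 + 2 * ‖B‖ ^ 4 * ϑ ^ 2
  have hK : 0 < K := by positivity
  -- Over one window `‖y‖²` shrinks by the factor `1 - 2 a ≤ exp (-2 a)`.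
  let a : ℝ := c / K
  have ha : 0 < a := div_pos hc hK
  have hmono : ∀ (y0 : Y) (σ : ℝ → ℝ) (y : ℝ → Y), IsPESignal T μ σ →
      IsDampedMildSolution Sg B σ y0 y → ∀ t ≥ (0 : ℝ), ‖y t‖ ≤ ‖y0‖ := by
    intro y0 σ y hσ hy t ht
    have h1 := energy_inequality hσ.1 hσ.2.1 hy ht
    have h2 : 0 ≤ ∫ s in (0 : ℝ)..t, σ s * ‖ContinuousLinearMap.adjoint B (y s)‖ ^ 2 :=
      intervalIntegral.integral_nonneg ht fun s _ => mul_nonneg (hσ.2.1 s).1 (sq_nonneg _)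
    exact le_of_sq_le_sq (by linarith) (norm_nonneg _)
  have hstep : ∀ (y0 : Y) (σ : ℝ → ℝ) (y : ℝ → Y), IsPESignal T μ σ →
      IsDampedMildSolution Sg B σ y0 y → ‖y ϑ‖ ≤ Real.exp (-a) * ‖y0‖ := by
    intro y0 σ y hσ hy
    have h1 := energy_inequality hσ.1 hσ.2.1 hy hϑ.le
    have h2 := (hobs σ hσ y0).trans (observation_le_dissipation hσ.1 hσ.2.1 hy hϑ)
    have h3 : a * ‖y0‖ ^ 2 ≤
        ∫ s in (0 : ℝ)..ϑ, σ s * ‖ContinuousLinearMap.adjoint B (y s)‖ ^ 2 := by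
      rw [div_mul_eq_mul_div, div_le_iff₀ hK]
      linarith
    have h4 : 1 - 2 * a ≤ Real.exp (-a) ^ 2 := by
      rw [← Real.exp_nat_mul]
      have := Real.add_one_le_exp (-(2 * a))
      push_cast
      rw [mul_neg]
      linarith
    refine le_of_sq_le_sq ?_ (by positivity)
    rw [mul_pow]
    nlinarith [mul_le_mul_of_nonneg_right h4 (sq_nonneg ‖y0‖)]
  have hiter : ∀ (n : ℕ) (y0 : Y) (σ : ℝ → ℝ) (y : ℝ → Y), IsPESignal T μ σ →
      IsDampedMildSolution Sg B σ y0 y → ‖y (n * ϑ)‖ ≤ Real.exp (-a * n) * ‖y0‖ := by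
    intro n
    induction n with
    | zero =>
      intro y0 σ y hσ hy
      simp [hy.2.1]
    | succ n ih =>
      intro y0 σ y hσ hy
      have h1 := ih _ _ _ (hσ.shift hϑ.le) (hy.shift hσ.1 hσ.2.1 hϑ.le)
      have h2 := hstep y0 σ y hσ hy
      rw [show ((n + 1 : ℕ) : ℝ) * ϑ = ϑ + n * ϑ by push_cast; ring,
        show -a * ((n + 1 : ℕ) : ℝ) = -a * n + -a by push_cast; ring, Real.exp_add, mul_assoc]
      exact h1.trans (by gcongr)
  refine ⟨Real.exp a, Real.one_le_exp ha.le, a / ϑ, div_pos ha hϑ, fun y0 σ y hσ hy t ht => ?_⟩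
  set n := ⌊t / ϑ⌋₊
  have hn1 : (n : ℝ) * ϑ ≤ t := (le_div_iff₀ hϑ).1 (Nat.floor_le (by positivity))
  have hn2 : t / ϑ < n + 1 := Nat.lt_floor_add_one _
  have hn0 : 0 ≤ (n : ℝ) * ϑ := by positivity
  have h1 := hmono _ _ _ (hσ.shift hn0) (hy.shift hσ.1 hσ.2.1 hn0) (t - n * ϑ) (by linarith)
  rw [add_sub_cancel] at h1
  refine h1.trans ((hiter n y0 σ y hσ hy).trans ?_)
  rw [← Real.exp_add]
  gcongr
  have h2 : a / ϑ * t = a * (t / ϑ) := by ring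
  rw [neg_mul, neg_mul, h2]
  nlinarith [mul_lt_mul_of_pos_left hn2 ha]
end

section
/- Let Y and U be Hilbert spaces, A the generator of a strongly continuous semigroup of contractions S(t) on Y, and B: U → Y a bounded linear operator with adjoint B*. Suppose (a_n, b_n), n ∈ ℕ, is a sequence of disjoint intervals in [0,∞), c_n, n ∈ ℕ, is a sequence of positive real numbers, and σ ∈ L^∞([0,∞);[0,1]) is such that the restriction σ(a_n + ·)|_{[0, b_n − a_n]} is of class K(A, B, b_n − a_n, c_n) for all n ∈ ℕ. If sup_{n∈ℕ}(b_n − a_n) < ∞ and Σ_{n=1}^∞ c_n = ∞, then for every y_0 ∈ Y the mild solution y of y'(t) = A y(t) − σ(t) B B* y(t), y(0) = y_0, satisfies ‖y(t)‖_Y → 0 as t → ∞. -/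
/-! The energy `‖y(t)‖²` is dissipated at rate at least `2 σ(t) ‖B* y(t)‖²`
(`mild_energy`). No domain regularity is available for a mild solution, so this is obtained from
the Duhamel formula on a short interval `[t, t + h]`: the contraction property and the expansion of
`‖y(t+h) + I‖²`, with `I` the Duhamel integral, give
`‖y(t+h)‖² + 2 ⟪y(t+h), I⟫ ≤ ‖y(t)‖²`, and strong continuity identifies the cross term with
`2 ∫ σ ‖B* y‖²` up to `o(h)`. A comparison principle for upper right Dini derivatives then yields
the integrated inequality.

On an interval `[a, b]` of length at most `L`, Duhamel's formula and the Cauchy–Schwarz inequality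
compare the damped trajectory with the free one starting from `y(a)`, so membership in the class
`𝒦` gives `c ‖y(a)‖² ≤ (2 + 2 ‖B*‖² ‖B‖² L²) ∫_a^b σ ‖B* y‖²` (`observability`). If the
nonincreasing function `‖y‖` stayed above some `ε > 0`, summing over the disjoint intervals and
using that the total dissipation is at most `‖y(0)‖² / 2` would bound the partial sums of `c`. -/

open Filter Set MeasureTheory

variable {Y U : Type*} [NormedAddCommGroup Y] [InnerProductSpace ℝ Y] [CompleteSpace Y]
  [NormedAddCommGroup U] [InnerProductSpace ℝ U] [CompleteSpace U]

/-- A signal `σ ∈ L^∞([0,T];[0,1])` is of class `𝒦(A,B,T,c)` if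
`∫_0^T σ(t) ‖B^* S(t) y₀‖² dt ≥ c ‖y₀‖²` for all `y₀ ∈ Y`. -/
def IsClassK (Sg : ContractionSemigroup Y) (B : U →L[ℝ] Y) (T c : ℝ) (σ : ℝ → ℝ) : Prop :=
  ∀ y0 : Y,
    c * ‖y0‖ ^ 2 ≤ ∫ t in (0 : ℝ)..T, σ t * ‖ContinuousLinearMap.adjoint B (Sg.S t y0)‖ ^ 2

open Topology

/-! ### Joint continuity and integrability -/

set_option linter.unusedSectionVars false in
lemma Sg_tendsto (Sg : ContractionSemigroup Y) {X : Type*} {l : Filter X} {r : X → ℝ} {w : X → Y}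
    {r0 : ℝ} {w0 : Y} (hr : Tendsto r l (𝓝[Ici 0] r0)) (hr0 : 0 ≤ r0) (hw : Tendsto w l (𝓝 w0)) :
    Tendsto (fun x => Sg.S (r x) (w x)) l (𝓝 (Sg.S r0 w0)) := by
  have h1 : Tendsto (fun x => Sg.S (r x) w0) l (𝓝 (Sg.S r0 w0)) :=
    (Sg.strong_continuity w0 r0 hr0).tendsto.comp hr
  have h2 : Tendsto (fun x => Sg.S (r x) (w x - w0)) l (𝓝 0) := by
    have h3 : Tendsto (fun x => ‖w x - w0‖) l (𝓝 0) := tendsto_iff_norm_sub_tendsto_zero.1 hw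
    refine squeeze_zero_norm' ?_ h3
    filter_upwards [hr.eventually self_mem_nhdsWithin] with x hx
    exact Sg.contraction _ hx _
  simpa using h2.add h1

set_option linter.unusedSectionVars false in
lemma Sg_continuousOn (Sg : ContractionSemigroup Y) {X : Type*} [TopologicalSpace X] {s : Set X}
    {r : X → ℝ} {w : X → Y} (hr : ContinuousOn r s) (hr0 : ∀ x ∈ s, 0 ≤ r x)
    (hw : ContinuousOn w s) : ContinuousOn (fun x => Sg.S (r x) (w x)) s := fun x hx =>
  Sg_tendsto Sg (tendsto_nhdsWithin_iff.2 ⟨hr x hx, by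
    filter_upwards [self_mem_nhdsWithin] with z hz using hr0 z hz⟩) (hr0 x hx) (hw x hx)

lemma signal_intervalIntegrable {σ : ℝ → ℝ} (hσ : Measurable σ ∧ ∀ t, σ t ∈ Icc (0 : ℝ) 1)
    (a b : ℝ) : IntervalIntegrable σ volume a b := by
  refine (intervalIntegrable_const (c := (1 : ℝ))).mono_fun' hσ.1.aestronglyMeasurable ?_
  refine Eventually.of_forall fun t => ?_
  simpa only [Real.norm_eq_abs, abs_of_nonneg (hσ.2 t).1] using (hσ.2 t).2

section Mild

variable {Sg : ContractionSemigroup Y} {B : U →L[ℝ] Y} {σ : ℝ → ℝ} {y0 : Y} {y : ℝ → Y}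

lemma kernel_continuousOn (hy : ContinuousOn y (Ici 0)) :
    ContinuousOn
      (fun p : ℝ × ℝ => Sg.S (p.1 - p.2) (B (ContinuousLinearMap.adjoint B (y p.2))))
      {p | 0 ≤ p.2 ∧ p.2 ≤ p.1} := by
  refine Sg_continuousOn Sg (by fun_prop) (fun p hp => sub_nonneg.2 hp.2) ?_
  have h : ContinuousOn (fun p : ℝ × ℝ => y p.2) {p | 0 ≤ p.2 ∧ p.2 ≤ p.1} :=
    hy.comp (by fun_prop) fun p hp => hp.1
  exact (B.comp (ContinuousLinearMap.adjoint B)).continuous.comp_continuousOn h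

lemma kernel_integrable (hσ : Measurable σ ∧ ∀ t, σ t ∈ Icc (0 : ℝ) 1)
    (hy : ContinuousOn y (Ici 0)) {a b t : ℝ} (ha : 0 ≤ a) (hab : a ≤ b) (hbt : b ≤ t) :
    IntervalIntegrable
      (fun s => σ s • Sg.S (t - s) (B (ContinuousLinearMap.adjoint B (y s)))) volume a b := by
  refine (signal_intervalIntegrable hσ a b).smul_continuousOn ?_
  rw [uIcc_of_le hab]
  exact (kernel_continuousOn (Sg := Sg) (B := B) hy).comp
    (f := fun s => (t, s)) (by fun_prop) fun s hs => ⟨ha.trans hs.1, hs.2.trans hbt⟩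

lemma obs_continuousOn (hy : ContinuousOn y (Ici 0)) :
    ContinuousOn (fun s => ContinuousLinearMap.adjoint B (y s)) (Ici 0) :=
  (ContinuousLinearMap.adjoint B).continuous.comp_continuousOn hy

lemma dissipation_integrable (hσ : Measurable σ ∧ ∀ t, σ t ∈ Icc (0 : ℝ) 1)
    (hy : ContinuousOn y (Ici 0)) {a b : ℝ} (ha : 0 ≤ a) (hab : a ≤ b) :
    IntervalIntegrable (fun s => σ s * ‖ContinuousLinearMap.adjoint B (y s)‖ ^ 2) volume a b := by
  refine (signal_intervalIntegrable hσ a b).mul_continuousOn ?_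
  rw [uIcc_of_le hab]
  exact (((obs_continuousOn hy).mono fun s hs => ha.trans hs.1).norm).pow 2

/-! ### Duhamel's formula and the energy inequality -/

/-- Duhamel's formula started at an arbitrary time `a ≥ 0`. -/
lemma duhamel (hσ : Measurable σ ∧ ∀ t, σ t ∈ Icc (0 : ℝ) 1)
    (hy : IsDampedMildSolution Sg B σ y0 y) {a t : ℝ} (ha : 0 ≤ a) (hat : a ≤ t) :
    Sg.S (t - a) (y a) =
      y t + ∫ s in a..t, σ s • Sg.S (t - s) (B (ContinuousLinearMap.adjoint B (y s))) := by
  obtain ⟨hc, -, hm⟩ := hy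
  rw [hm a ha, hm t (ha.trans hat), map_sub,
    ← ContinuousLinearMap.intervalIntegral_comp_comm _
      (kernel_integrable hσ hc le_rfl ha le_rfl),
    ← intervalIntegral.integral_add_adjacent_intervals
      (kernel_integrable (t := t) hσ hc le_rfl ha hat)
      (kernel_integrable (t := t) hσ hc ha hat le_rfl)]
  have e1 : Sg.S (t - a) (Sg.S a y0) = Sg.S t y0 := by
    rw [← ContinuousLinearMap.comp_apply, ← Sg.map_add _ _ (sub_nonneg.2 hat) ha,
      sub_add_cancel]
  have e2 : ∫ s in (0 : ℝ)..a, Sg.S (t - a)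
        (σ s • Sg.S (a - s) (B (ContinuousLinearMap.adjoint B (y s)))) =
      ∫ s in (0 : ℝ)..a, σ s • Sg.S (t - s) (B (ContinuousLinearMap.adjoint B (y s))) := by
    refine intervalIntegral.integral_congr fun s hs => ?_
    rw [uIcc_of_le ha] at hs
    simp only [map_smul]
    rw [← ContinuousLinearMap.comp_apply, ← Sg.map_add _ _ (sub_nonneg.2 hat)
      (sub_nonneg.2 hs.2), sub_add_sub_cancel]
  rw [e1, e2]
  abel

/-- Short-time form of the energy inequality: the error is `o(h)` at each fixed time. -/
lemma energy_step (hσ : Measurable σ ∧ ∀ t, σ t ∈ Icc (0 : ℝ) 1)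
    (hy : IsDampedMildSolution Sg B σ y0 y) {t ε : ℝ} (ht : 0 ≤ t) (hε : 0 < ε) :
    ∀ᶠ x in 𝓝[>] t, ‖y x‖ ^ 2 - ‖y t‖ ^ 2
      + 2 * (∫ s in t..x, σ s * ‖ContinuousLinearMap.adjoint B (y s)‖ ^ 2)
        ≤ 2 * ε * (x - t) := by
  have hc := hy.1
  set D : Set (ℝ × ℝ) := {p | 0 ≤ p.2 ∧ p.2 ≤ p.1}
  -- The discrepancy between the cross term and the dissipation is continuous and vanishes on
  -- the diagonal.
  let F : ℝ × ℝ → ℝ := fun p =>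
    ‖ContinuousLinearMap.adjoint B (y p.2)‖ ^ 2 -
      inner ℝ (y p.1) (Sg.S (p.1 - p.2) (B (ContinuousLinearMap.adjoint B (y p.2))))
  have hF : ContinuousOn F D := by
    have h1 : ContinuousOn (fun p : ℝ × ℝ => y p.1) D :=
      hc.comp (by fun_prop) fun p hp => hp.1.trans hp.2
    have h2 : ContinuousOn (fun p : ℝ × ℝ => ContinuousLinearMap.adjoint B (y p.2)) D :=
      (obs_continuousOn hc).comp (by fun_prop) fun p hp => hp.1
    exact (h2.norm.pow 2).sub (h1.inner (𝕜 := ℝ) (kernel_continuousOn hc))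
  have hF0 : F (t, t) = 0 := by
    simp only [F, sub_self, Sg.map_zero, ContinuousLinearMap.id_apply]
    rw [← ContinuousLinearMap.adjoint_inner_left, real_inner_self_eq_norm_sq, sub_self]
  have hev : ∀ᶠ p in 𝓝[D] (t, t), F p < ε := by
    have h := (hF (t, t) ⟨ht, le_rfl⟩).tendsto
    rw [hF0] at h
    exact h.eventually_lt_const hε
  obtain ⟨δ, hδ, hball⟩ := Metric.mem_nhdsWithin_iff.1 hev
  filter_upwards [Ioo_mem_nhdsGT (show t < t + δ by linarith)] with x hx
  have htx : t ≤ x := hx.1.le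
  have hFx : ∀ s ∈ Icc t x, F (x, s) ≤ ε := fun s hs => by
    refine le_of_lt (hball ⟨?_, ht.trans hs.1, hs.2⟩)
    rw [Metric.mem_ball, Prod.dist_eq, Real.dist_eq, Real.dist_eq]
    refine max_lt ?_ ?_
    · rw [abs_of_nonneg (by simpa using htx)]; simpa using (by linarith [hx.2] : x - t < δ)
    · rw [abs_of_nonneg (by simpa using hs.1)]
      simpa using (by linarith [hx.2, hs.2] : s - t < δ)
  have hI := kernel_integrable (Sg := Sg) (B := B) (t := x) hσ hc ht htx le_rfl
  have hQ := dissipation_integrable (B := B) hσ hc ht htx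
  set I := ∫ s in t..x, σ s • Sg.S (x - s) (B (ContinuousLinearMap.adjoint B (y s))) with hIdef
  have hcon : ‖y x + I‖ ^ 2 ≤ ‖y t‖ ^ 2 := by
    rw [hIdef, ← duhamel hσ hy ht htx]
    gcongr
    exact Sg.contraction _ (sub_nonneg.2 htx) _
  rw [norm_add_sq_real] at hcon
  have hinner : inner ℝ (y x) I = ∫ s in t..x,
      inner ℝ (y x) (σ s • Sg.S (x - s) (B (ContinuousLinearMap.adjoint B (y s)))) := by
    have := ContinuousLinearMap.intervalIntegral_comp_comm (innerSL ℝ (y x)) hI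
    simpa only [innerSL_apply_apply] using this.symm
  have hJ : IntervalIntegrable (fun s => inner ℝ (y x)
      (σ s • Sg.S (x - s) (B (ContinuousLinearMap.adjoint B (y s))))) volume t x := by
    rw [intervalIntegrable_iff] at hI ⊢
    exact (innerSL ℝ (y x)).integrable_comp hI
  have hle : (∫ s in t..x, σ s * ‖ContinuousLinearMap.adjoint B (y s)‖ ^ 2)
      - inner ℝ (y x) I ≤ ε * (x - t) := by
    rw [hinner, ← intervalIntegral.integral_sub hQ hJ]
    calc _ ≤ ∫ _ in t..x, ε := by
          refine intervalIntegral.integral_mono_on htx (hQ.sub hJ) intervalIntegrable_const ?_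
          intro s hs
          have h1 := hFx s hs
          obtain ⟨h2, h3⟩ := hσ.2 s
          rw [inner_smul_right]
          change σ s * _ - σ s * _ ≤ ε
          rw [← mul_sub]
          change σ s * F (x, s) ≤ ε
          nlinarith
      _ = ε * (x - t) := by simp [mul_comm]
  nlinarith [sq_nonneg ‖I‖]

/-- Energy inequality for mild solutions, by the Dini-derivative comparison principle applied to
`x ↦ ‖y x‖² + 2 ∫_a^x σ ‖B* y‖²`. -/
lemma mild_energy (hσ : Measurable σ ∧ ∀ t, σ t ∈ Icc (0 : ℝ) 1)
    (hy : IsDampedMildSolution Sg B σ y0 y) {a b : ℝ} (ha : 0 ≤ a) (hab : a ≤ b) :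
    ‖y b‖ ^ 2 + 2 * (∫ s in a..b, σ s * ‖ContinuousLinearMap.adjoint B (y s)‖ ^ 2)
      ≤ ‖y a‖ ^ 2 := by
  have hc := hy.1
  let q : ℝ → ℝ := fun s => σ s * ‖ContinuousLinearMap.adjoint B (y s)‖ ^ 2
  let G : ℝ → ℝ := fun x => ‖y x‖ ^ 2 + 2 * ∫ s in a..x, q s
  have hG : ContinuousOn G (Icc a b) := by
    have h1 : ContinuousOn (fun x => ∫ s in a..x, q s) (Icc a b) := by
      have h := intervalIntegral.continuousOn_primitive_interval (μ := volume)
        (f := q) (a := a) (b := b) (by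
          rw [uIcc_of_le hab, integrableOn_Icc_iff_integrableOn_Ioc,
            ← intervalIntegrable_iff_integrableOn_Ioc_of_le hab]
          exact dissipation_integrable hσ hc ha hab)
      rwa [uIcc_of_le hab] at h
    have h2 : ContinuousOn (fun x => ‖y x‖ ^ 2) (Icc a b) :=
      ((hc.mono fun s hs => ha.trans hs.1).norm).pow 2
    exact h2.add (h1.const_smul (2 : ℝ))
  have key := image_le_of_liminf_slope_right_le_deriv_boundary hG
    (B := fun _ => G a) (B' := fun _ => 0) le_rfl continuousOn_const
    (fun x _ => hasDerivWithinAt_const _ _ _) (by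
      intro x hx r hr
      have hx0 : 0 ≤ x := ha.trans hx.1
      refine Eventually.frequently ?_
      filter_upwards [energy_step hσ hy hx0 (show 0 < r / 4 by linarith),
        self_mem_nhdsWithin] with z hz hxz
      have hxz : x < z := hxz
      rw [slope_def_field, div_lt_iff₀ (by linarith)]
      have hadd := intervalIntegral.integral_add_adjacent_intervals
        (dissipation_integrable (B := B) hσ hc ha hx.1)
        (dissipation_integrable (B := B) hσ hc hx0 hxz.le)
      simp only [G, q]
      nlinarith [mul_pos hr (sub_pos.2 hxz)])
    (right_mem_Icc.2 hab)
  simpa [G, q] using key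

/-! ### Observability along the damped trajectory -/

/-- The free observation from `y(a)` is controlled by the damped dissipation on `[a, b]`. -/
lemma observability (hσ : Measurable σ ∧ ∀ t, σ t ∈ Icc (0 : ℝ) 1)
    (hy : IsDampedMildSolution Sg B σ y0 y) {a b c L : ℝ} (ha : 0 ≤ a) (hab : a < b)
    (hL : b - a ≤ L) (hK : IsClassK Sg B (b - a) c (fun t => σ (a + t))) :
    c * ‖y a‖ ^ 2 ≤ (2 + 2 * (‖ContinuousLinearMap.adjoint B‖ * ‖B‖) ^ 2 * L ^ 2) *
      ∫ s in a..b, σ s * ‖ContinuousLinearMap.adjoint B (y s)‖ ^ 2 := by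
  have hc := hy.1
  have hQ := dissipation_integrable (B := B) hσ hc ha hab.le
  set J := ∫ s in a..b, σ s * ‖ContinuousLinearMap.adjoint B (y s)‖ ^ 2 with hJ
  set M := ‖ContinuousLinearMap.adjoint B‖ * ‖B‖ with hM
  have hM0 : 0 ≤ M := by positivity
  set T := b - a with hT
  have hT0 : 0 < T := sub_pos.2 hab
  have hobs : ContinuousOn (fun s => ‖ContinuousLinearMap.adjoint B (y s)‖) (Icc a b) :=
    ((obs_continuousOn hc).mono fun s hs => ha.trans hs.1).norm
  have hf : IntervalIntegrable (fun s => σ s * ‖ContinuousLinearMap.adjoint B (y s)‖)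
      volume a b := by
    refine (signal_intervalIntegrable hσ a b).mul_continuousOn ?_
    rwa [uIcc_of_le hab.le]
  have hf0 : ∀ s, 0 ≤ σ s * ‖ContinuousLinearMap.adjoint B (y s)‖ := fun s =>
    mul_nonneg (hσ.2 s).1 (norm_nonneg _)
  set F := ∫ s in a..b, σ s * ‖ContinuousLinearMap.adjoint B (y s)‖ with hF
  have hF0 : 0 ≤ F := intervalIntegral.integral_nonneg hab.le fun s _ => hf0 s
  have hJ0 : 0 ≤ J := intervalIntegral.integral_nonneg hab.le fun s _ =>
    mul_nonneg (hσ.2 s).1 (sq_nonneg _)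
  -- Cauchy–Schwarz, from integrating `2 m f ≤ f² + m²` with `m = F / T` the mean of `f`.
  have hCS : F ^ 2 ≤ T * J := by
    have h : ∫ s in a..b, 2 * (F / T) * (σ s * ‖ContinuousLinearMap.adjoint B (y s)‖)
        ≤ ∫ s in a..b, (σ s * ‖ContinuousLinearMap.adjoint B (y s)‖ ^ 2 + (F / T) ^ 2) := by
      refine intervalIntegral.integral_mono_on hab.le (hf.const_mul _)
        (hQ.add intervalIntegrable_const) fun s _ => ?_
      obtain ⟨h0, h1⟩ := hσ.2 s
      set n := ‖ContinuousLinearMap.adjoint B (y s)‖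
      nlinarith [sq_nonneg (σ s * n - F / T), mul_nonneg (mul_nonneg h0 (sub_nonneg.2 h1))
        (sq_nonneg n)]
    rw [intervalIntegral.integral_const_mul, intervalIntegral.integral_add hQ
      intervalIntegrable_const, intervalIntegral.integral_const, ← hF, ← hJ, ← hT,
      smul_eq_mul] at h
    have e1 : 2 * (F / T) * F = 2 * (F ^ 2 / T) := by ring
    have e2 : T * (F / T) ^ 2 = F ^ 2 / T := by field_simp
    rw [e1, e2] at h
    have h3 : F ^ 2 / T ≤ J := by linarith
    rw [div_le_iff₀ hT0] at h3
    linarith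
  have hpt : ∀ t ∈ Icc 0 T, ‖ContinuousLinearMap.adjoint B (Sg.S t (y a))‖
      ≤ ‖ContinuousLinearMap.adjoint B (y (a + t))‖ + M * F := by
    intro t ht
    have hat : a ≤ a + t := by linarith [ht.1]
    have htb : a + t ≤ b := by linarith [ht.2]
    have hd := duhamel hσ hy ha hat
    rw [add_sub_cancel_left] at hd
    have hsub : uIcc a (a + t) ⊆ uIcc a b := by
      rw [uIcc_of_le hat, uIcc_of_le hab.le]; exact Icc_subset_Icc_right htb
    have hI : ‖∫ s in a..(a + t), σ s •
        Sg.S (a + t - s) (B (ContinuousLinearMap.adjoint B (y s)))‖ ≤ ‖B‖ * F := by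
      calc _ ≤ ∫ s in a..(a + t),
              ‖B‖ * (σ s * ‖ContinuousLinearMap.adjoint B (y s)‖) := by
            refine intervalIntegral.norm_integral_le_of_norm_le hat
              (Eventually.of_forall fun s hs => ?_) ((hf.mono_set hsub).const_mul _)
            rw [norm_smul, Real.norm_eq_abs, abs_of_nonneg (hσ.2 s).1, mul_left_comm]
            refine mul_le_mul_of_nonneg_left ?_ (hσ.2 s).1
            exact (Sg.contraction _ (sub_nonneg.2 hs.2) _).trans (B.le_opNorm _)
        _ ≤ ‖B‖ * F := by
            rw [intervalIntegral.integral_const_mul]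
            refine mul_le_mul_of_nonneg_left ?_ (norm_nonneg _)
            exact intervalIntegral.integral_mono_interval le_rfl hat htb
              (Eventually.of_forall hf0) hf
    rw [hd, map_add]
    refine (norm_add_le _ _).trans (add_le_add le_rfl ?_)
    refine (ContinuousLinearMap.le_opNorm _ _).trans ?_
    rw [hM, mul_assoc]
    exact mul_le_mul_of_nonneg_left hI (norm_nonneg _)
  have hshift : ∫ t in (0 : ℝ)..T, σ (a + t) * ‖ContinuousLinearMap.adjoint B (y (a + t))‖ ^ 2
      = J := by
    have := intervalIntegral.integral_comp_add_left (a := 0) (b := T)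
      (fun s => σ s * ‖ContinuousLinearMap.adjoint B (y s)‖ ^ 2) a
    rw [this, hJ, hT]; simp
  have hσ' : Measurable (fun t => σ (a + t)) ∧ ∀ t, σ (a + t) ∈ Icc (0 : ℝ) 1 :=
    ⟨hσ.1.comp (measurable_const_add a), fun t => hσ.2 _⟩
  have hi1 : IntervalIntegrable
      (fun t => σ (a + t) * ‖ContinuousLinearMap.adjoint B (Sg.S t (y a))‖ ^ 2) volume 0 T := by
    refine dissipation_integrable hσ' (Sg.strong_continuity (y a)) le_rfl hT0.le
  have hi2 : IntervalIntegrable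
      (fun t => σ (a + t) * ‖ContinuousLinearMap.adjoint B (y (a + t))‖ ^ 2) volume 0 T := by
    refine dissipation_integrable (y := fun t => y (a + t)) hσ' ?_ le_rfl hT0.le
    exact hc.comp (by fun_prop) fun t ht => add_nonneg ha ht
  have hfin : ∫ t in (0 : ℝ)..T, σ (a + t) *
        ‖ContinuousLinearMap.adjoint B (Sg.S t (y a))‖ ^ 2
      ≤ 2 * J + T * (2 * (M * F) ^ 2) := by
    calc _ ≤ ∫ t in (0 : ℝ)..T,
            (2 * (σ (a + t) * ‖ContinuousLinearMap.adjoint B (y (a + t))‖ ^ 2)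
              + 2 * (M * F) ^ 2) := by
          refine intervalIntegral.integral_mono_on hT0.le hi1
            ((hi2.const_mul 2).add intervalIntegrable_const) fun t ht => ?_
          obtain ⟨h0, h1⟩ := hσ.2 (a + t)
          have h2 := hpt t ht
          have h3 : ‖ContinuousLinearMap.adjoint B (Sg.S t (y a))‖ ^ 2 ≤
              2 * ‖ContinuousLinearMap.adjoint B (y (a + t))‖ ^ 2 + 2 * (M * F) ^ 2 := by
            refine (pow_le_pow_left₀ (norm_nonneg _) h2 2).trans ?_
            nlinarith [sq_nonneg (‖ContinuousLinearMap.adjoint B (y (a + t))‖ - M * F)]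
          nlinarith [mul_le_mul_of_nonneg_left h3 h0,
            mul_nonneg (sub_nonneg.2 h1) (sq_nonneg (M * F))]
      _ = _ := by
          rw [intervalIntegral.integral_add (hi2.const_mul 2) intervalIntegrable_const,
            intervalIntegral.integral_const_mul, hshift, intervalIntegral.integral_const]
          simp
  refine (hK (y a)).trans (hfin.trans ?_)
  have hTL : T ^ 2 ≤ L ^ 2 := pow_le_pow_left₀ hT0.le hL 2
  calc 2 * J + T * (2 * (M * F) ^ 2) = 2 * J + 2 * M ^ 2 * (T * F ^ 2) := by ring
    _ ≤ 2 * J + 2 * M ^ 2 * (T * (T * J)) := by gcongr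
    _ = 2 * J + 2 * M ^ 2 * (T ^ 2 * J) := by ring
    _ ≤ 2 * J + 2 * M ^ 2 * (L ^ 2 * J) := by gcongr
    _ = _ := by ring

end Mild

/-! ### Summation over the disjoint intervals -/

lemma sum_integral_le {g : ℝ → ℝ} (hg0 : ∀ s, 0 ≤ g s)
    (hg : ∀ T, 0 ≤ T → IntervalIntegrable g volume 0 T) {a b : ℕ → ℝ}
    (hab : ∀ n, 0 ≤ a n ∧ a n < b n)
    (hdisj : ∀ m n : ℕ, m ≠ n → Disjoint (Ioo (a m) (b m)) (Ioo (a n) (b n))) {C : ℝ}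
    (hC : ∀ T, 0 ≤ T → ∫ s in (0 : ℝ)..T, g s ≤ C) (N : ℕ) :
    ∑ n ∈ Finset.range N, ∫ s in (a n)..(b n), g s ≤ C := by
  set T := ∑ n ∈ Finset.range N, b n
  have hb : ∀ n, 0 ≤ b n := fun n => (hab n).1.trans (hab n).2.le
  have hT : 0 ≤ T := Finset.sum_nonneg fun n _ => hb n
  have hsub : ∀ n ∈ Finset.range N, Ioo (a n) (b n) ⊆ Ioc 0 T := fun n hn s hs =>
    ⟨(hab n).1.trans_lt hs.1, hs.2.le.trans (Finset.single_le_sum (fun i _ => hb i) hn)⟩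
  have hgT : IntegrableOn g (Ioc 0 T) :=
    (intervalIntegrable_iff_integrableOn_Ioc_of_le hT).1 (hg T hT)
  calc ∑ n ∈ Finset.range N, ∫ s in (a n)..(b n), g s
      = ∑ n ∈ Finset.range N, ∫ s in Ioo (a n) (b n), g s := by
        refine Finset.sum_congr rfl fun n _ => ?_
        rw [intervalIntegral.integral_of_le (hab n).2.le, integral_Ioc_eq_integral_Ioo]
    _ = ∫ s in ⋃ n ∈ Finset.range N, Ioo (a n) (b n), g s :=
        (integral_biUnion_finset _ (fun _ _ => measurableSet_Ioo)
          (fun m _ n _ hmn => hdisj m n hmn) fun n hn => hgT.mono_set (hsub n hn)).symm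
    _ ≤ ∫ s in Ioc 0 T, g s :=
        setIntegral_mono_set hgT (Eventually.of_forall hg0)
          (LE.le.eventuallyLE (iUnion₂_subset hsub))
    _ = ∫ s in (0 : ℝ)..T, g s := (intervalIntegral.integral_of_le hT).symm
    _ ≤ C := hC T hT

/-- **Theorem (strong stability for rarefied excitations).**
Let `Y`, `U` be Hilbert spaces, `A` the generator of a strongly continuous semigroup of
contractions `S(t)` on `Y` and `B : U → Y` bounded linear.  Suppose `(aₙ, bₙ)`, `n ∈ ℕ`,
are disjoint intervals in `[0,∞)`, `cₙ > 0`, and `σ ∈ L^∞([0,∞);[0,1])` is such that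
the restriction `σ(aₙ + ·)|_{[0,bₙ−aₙ]}` is of class `𝒦(A,B,bₙ−aₙ,cₙ)` for all `n`.
If `sup_n (bₙ − aₙ) < ∞` and `∑ₙ cₙ = ∞`, then every mild solution of
`y' = A y − σ(t) B B^* y`, `y(0) = y₀`, satisfies `‖y(t)‖ → 0` as `t → ∞`. -/
theorem strong_stability_of_summed_excitations
    (Sg : ContractionSemigroup Y) (B : U →L[ℝ] Y)
    (a b : ℕ → ℝ) (c : ℕ → ℝ) (σ : ℝ → ℝ)
    (hab : ∀ n, 0 ≤ a n ∧ a n < b n)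
    (hdisj : ∀ m n : ℕ, m ≠ n → Disjoint (Ioo (a m) (b m)) (Ioo (a n) (b n)))
    (hc : ∀ n, 0 < c n)
    (hσ : Measurable σ ∧ ∀ t, σ t ∈ Icc (0 : ℝ) 1)
    (hK : ∀ n, IsClassK Sg B (b n - a n) (c n) (fun t => σ (a n + t)))
    (hsup : ∃ L : ℝ, ∀ n, b n - a n ≤ L)
    (hdiv : ¬ Summable c) :
    ∀ (y0 : Y) (y : ℝ → Y), IsDampedMildSolution Sg B σ y0 y →
      Tendsto (fun t => ‖y t‖) atTop (nhds 0) := by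
  intro y0 y hy
  obtain ⟨L, hL⟩ := hsup
  have hc' := hy.1
  set g : ℝ → ℝ := fun s => σ s * ‖ContinuousLinearMap.adjoint B (y s)‖ ^ 2 with hg
  have hg0 : ∀ s, 0 ≤ g s := fun s => mul_nonneg (hσ.2 s).1 (sq_nonneg _)
  have hmono : ∀ s t, 0 ≤ s → s ≤ t → ‖y t‖ ≤ ‖y s‖ := fun s t hs hst => by
    have h1 := mild_energy hσ hy hs hst
    have h2 : 0 ≤ ∫ s in s..t, g s := intervalIntegral.integral_nonneg hst fun s _ => hg0 s
    exact (sq_le_sq₀ (norm_nonneg _) (norm_nonneg _)).1 (by linarith)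
  rw [Metric.tendsto_atTop]
  intro ε hε
  suffices h : ∃ t0, 0 ≤ t0 ∧ ‖y t0‖ < ε by
    obtain ⟨t0, ht0, hlt⟩ := h
    refine ⟨t0, fun t ht => ?_⟩
    rw [Real.dist_eq, sub_zero, abs_of_nonneg (norm_nonneg _)]
    exact (hmono t0 t ht0 ht).trans_lt hlt
  by_contra! hge
  refine hdiv ?_
  set C := 2 + 2 * (‖ContinuousLinearMap.adjoint B‖ * ‖B‖) ^ 2 * L ^ 2
  have hC0 : 0 ≤ C := by positivity
  refine summable_of_sum_range_le (c := C * ‖y 0‖ ^ 2 / ε ^ 2) (fun n => (hc n).le) fun N => ?_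
  rw [le_div_iff₀ (by positivity), Finset.sum_mul]
  calc ∑ n ∈ Finset.range N, c n * ε ^ 2
      ≤ ∑ n ∈ Finset.range N, C * ∫ s in (a n)..(b n), g s := by
        refine Finset.sum_le_sum fun n _ => ?_
        have h1 := observability hσ hy (hab n).1 (hab n).2 (hL n) (hK n)
        refine le_trans (mul_le_mul_of_nonneg_left ?_ (hc n).le) h1
        exact pow_le_pow_left₀ hε.le (hge (a n) (hab n).1) 2
    _ ≤ C * ‖y 0‖ ^ 2 := by
        rw [← Finset.mul_sum]
        refine mul_le_mul_of_nonneg_left (sum_integral_le hg0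
          (fun T hT => dissipation_integrable hσ hc' le_rfl hT) hab hdisj (fun T hT => ?_) N) hC0
        have h1 := mild_energy hσ hy le_rfl hT
        have h2 : 0 ≤ ∫ s in (0 : ℝ)..T, g s :=
          intervalIntegral.integral_nonneg hT fun s _ => hg0 s
        nlinarith [sq_nonneg ‖y T‖]
end
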